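/- Let h₁ and h₂ be two non-negative Lebesgue measurable functions on ℝⁿ and let 1 ≤ p ≤ ∞. Then ‖h₁ + h₂ | L_p(ℝⁿ)‖ ≤ ‖h₁* + h₂* | L_p(0,∞)‖, where h₁* and h₂* are the non-increasing rearrangements of h₁ and h₂. -/

import Mathlib

/-!
For `p = 1` both sides are sums of two integrals, and a function and its rearrangement are
equimeasurable (`lintegral_rpow_rearrangeE`). For `p = ∞` the rearrangements are non-increasing, so
`‖h₁* + h₂*‖_∞` is the sum of their suprema, each of which bounds the corresponding function almost
everywhere (`ae_le_iSup_rearrangeE`).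

For `1 < p < ∞` with conjugate exponent `q`, put `F = h₁ + h₂` and `G = F ^ (p - 1)`. The
Hardy–Littlewood inequality `∫ f g ≤ ∫ f* g*` (`lintegral_mul_le_rearrangeE`), Hölder's inequality
and equimeasurability of `G` and `G*` give
`∫ F ^ p = ∫ h₁ G + ∫ h₂ G ≤ ∫ (h₁* + h₂*) G* ≤ ‖h₁* + h₂*‖_p (∫ F ^ p) ^ (1 / q)`,
and one divides by the last factor. This requires `∫ F ^ p < ∞`, which holds as soon as the
right-hand side of the claim is finite, because then `h₁` and `h₂` both lie in `L_p`.

The Hardy–Littlewood inequality comes from writing both sides, via the layer cake formula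
(`lintegral_eq_lintegral_meas_ofReal_lt`), as double integrals of the measures of
`{s < f} ∩ {t < g}`; for the rearrangements, the superlevel sets are initial intervals and this
measure is the minimum of the measures of `{s < f}` and `{t < g}`.
-/

open MeasureTheory ENNReal NNReal

noncomputable section

/-- The `L_p` (quasi)norm of an `ℝ≥0∞`-valued function, `0 < p ≤ ∞`, with the essential
supremum when `p = ∞`. -/
def lpNormE {α : Type*} [MeasurableSpace α] (μ : Measure α) (p : ℝ≥0∞)
    (f : α → ℝ≥0∞) : ℝ≥0∞ :=
  if p = ∞ then essSup f μ else (∫⁻ x, f x ^ p.toReal ∂μ) ^ (1 / p.toReal)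

/-- The non-increasing rearrangement of a measurable function `h` on `ℝⁿ`:
`h*(t) = sup {λ > 0 : μ{x : |h(x)| > λ} > t}`, with `sup ∅ = 0`. -/
def rearrangement {n : ℕ} (h : EuclideanSpace ℝ (Fin n) → ℝ) (t : ℝ) : ℝ≥0∞ :=
  sSup {l : ℝ≥0∞ | 0 < l ∧ ENNReal.ofReal t < volume {x | l < (‖h x‖₊ : ℝ≥0∞)}}

/-- The non-increasing rearrangement of an `ℝ≥0∞`-valued function on a general measure space. It is
needed at this generality for the power `(h₁ + h₂) ^ (p - 1)`. -/
def rearrangeE {α : Type*} [MeasurableSpace α] (μ : Measure α) (f : α → ℝ≥0∞) (t : ℝ) : ℝ≥0∞ :=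
  sSup {l : ℝ≥0∞ | 0 < l ∧ ENNReal.ofReal t < μ {x | l < f x}}

section Rearrange

variable {α : Type*} [MeasurableSpace α] {μ : Measure α}

theorem rearrangeE_antitone (f : α → ℝ≥0∞) : Antitone (rearrangeE μ f) := fun _ _ hst =>
  sSup_le_sSup fun _ hl => ⟨hl.1, (ENNReal.ofReal_le_ofReal hst).trans_lt hl.2⟩

theorem measurable_rearrangeE (f : α → ℝ≥0∞) : Measurable (rearrangeE μ f) :=
  (rearrangeE_antitone f).measurable

/-- The rearrangement is the generalized inverse of the distribution function, which is
right-continuous. -/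
theorem lt_rearrangeE_iff (f : α → ℝ≥0∞) (l : ℝ≥0∞) (t : ℝ) :
    l < rearrangeE μ f t ↔ ENNReal.ofReal t < μ {x | l < f x} := by
  constructor
  · intro h
    obtain ⟨l', ⟨_, h'⟩, hl⟩ := lt_sSup_iff.1 h
    exact h'.trans_le (measure_mono fun x hx => hl.trans hx)
  · intro h
    have hl : l < ∞ := by
      by_contra! hl
      simp [top_le_iff.1 hl] at h
    -- Continuity of `μ` from below along levels decreasing to `l` gives a level `l' > l`.
    obtain ⟨u, hu, hul, hlim⟩ := exists_seq_strictAnti_tendsto' hl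
    have hU : {x | l < f x} = ⋃ k, {x | u k < f x} := by
      ext x
      simp only [Set.mem_ofPred_eq, Set.mem_iUnion]
      constructor
      · intro hx
        exact (hlim.eventually (gt_mem_nhds hx)).exists
      · rintro ⟨k, hk⟩
        exact (hul k).1.trans hk
    have hmono : Monotone fun k => {x | u k < f x} := fun i j hij x hx =>
      (hu.antitone hij).trans_lt hx
    rw [hU, hmono.measure_iUnion] at h
    obtain ⟨k, hk⟩ := lt_iSup_iff.1 h
    exact (hul k).1.trans_le (le_sSup ⟨(zero_le).trans_lt (hul k).1, hk⟩)

theorem volume_ofReal_lt (m : ℝ≥0∞) :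
    (volume.restrict (Set.Ioi (0 : ℝ))) {t | ENNReal.ofReal t < m} = m := by
  rw [Measure.restrict_apply (measurableSet_lt (by fun_prop) measurable_const)]
  induction m with
  | top => simp
  | coe m =>
    have : {t : ℝ | ENNReal.ofReal t < (m : ℝ≥0∞)} ∩ Set.Ioi 0 = Set.Ioo 0 (m : ℝ) := by
      ext t
      simp only [Set.mem_inter_iff, Set.mem_ofPred_eq, Set.mem_Ioi, Set.mem_Ioo]
      rw [and_comm]
      refine and_congr_right fun ht => ?_
      rw [← ENNReal.ofReal_coe_nnreal, ENNReal.ofReal_lt_ofReal_iff_of_nonneg ht.le]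
    rw [this]
    simp

/-- A function and its rearrangement are equimeasurable. -/
theorem volume_lt_rearrangeE (f : α → ℝ≥0∞) (l : ℝ≥0∞) :
    (volume.restrict (Set.Ioi (0 : ℝ))) {t | l < rearrangeE μ f t} = μ {x | l < f x} := by
  simp_rw [lt_rearrangeE_iff]
  exact volume_ofReal_lt _

/-- Layer cake formula for functions that may take the value `∞`. -/
theorem lintegral_eq_lintegral_meas_ofReal_lt [SFinite μ] {f : α → ℝ≥0∞} (hf : Measurable f) :
    ∫⁻ x, f x ∂μ = ∫⁻ s in Set.Ioi (0 : ℝ), μ {x | ENNReal.ofReal s < f x} := by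
  have hS : MeasurableSet {z : α × ℝ | ENNReal.ofReal z.2 < f z.1} :=
    measurableSet_lt (by fun_prop) (by fun_prop)
  have h1 := Measure.prod_apply (μ := μ) (ν := volume.restrict (Set.Ioi (0 : ℝ))) hS
  have h2 := Measure.prod_apply_symm (μ := μ) (ν := volume.restrict (Set.Ioi (0 : ℝ))) hS
  calc ∫⁻ x, f x ∂μ
      = ∫⁻ x, (volume.restrict (Set.Ioi (0 : ℝ))) {s | ENNReal.ofReal s < f x} ∂μ := by
        simp_rw [volume_ofReal_lt]
    _ = _ := h1.symm.trans h2

theorem lintegral_rpow_rearrangeE [SFinite μ] {f : α → ℝ≥0∞} (hf : Measurable f) {q : ℝ}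
    (hq : 0 < q) :
    ∫⁻ t in Set.Ioi (0 : ℝ), rearrangeE μ f t ^ q = ∫⁻ x, f x ^ q ∂μ := by
  rw [lintegral_eq_lintegral_meas_ofReal_lt ((measurable_rearrangeE f).pow_const q),
    lintegral_eq_lintegral_meas_ofReal_lt (hf.pow_const q)]
  simp_rw [← ENNReal.rpow_inv_lt_iff hq]
  simp_rw [volume_lt_rearrangeE]

theorem lintegral_rearrangeE [SFinite μ] {f : α → ℝ≥0∞} (hf : Measurable f) :
    ∫⁻ t in Set.Ioi (0 : ℝ), rearrangeE μ f t = ∫⁻ x, f x ∂μ := by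
  simpa using lintegral_rpow_rearrangeE (μ := μ) hf one_pos

/-- The layer cake formula for a product of two functions. -/
theorem lintegral_mul_eq_lintegral_meas [SFinite μ] {f g : α → ℝ≥0∞} (hf : Measurable f)
    (hg : Measurable g) :
    ∫⁻ x, f x * g x ∂μ = ∫⁻ s in Set.Ioi (0 : ℝ), ∫⁻ t in Set.Ioi (0 : ℝ),
      μ ({x | ENNReal.ofReal t < g x} ∩ {x | ENNReal.ofReal s < f x}) := by
  have h : ∫⁻ x, f x * g x ∂μ = ∫⁻ x, f x ∂(μ.withDensity g) := by
    rw [lintegral_withDensity_eq_lintegral_mul _ hg hf]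
    simp [mul_comm]
  rw [h, lintegral_eq_lintegral_meas_ofReal_lt hf]
  refine lintegral_congr fun s => ?_
  rw [withDensity_apply _ (measurableSet_lt measurable_const hf),
    lintegral_eq_lintegral_meas_ofReal_lt hg]
  refine lintegral_congr fun t => ?_
  rw [Measure.restrict_apply (measurableSet_lt measurable_const hg)]

/-- The Hardy–Littlewood rearrangement inequality. -/
theorem lintegral_mul_le_rearrangeE [SFinite μ] {f g : α → ℝ≥0∞} (hf : Measurable f)
    (hg : Measurable g) :
    ∫⁻ x, f x * g x ∂μ ≤ ∫⁻ t in Set.Ioi (0 : ℝ), rearrangeE μ f t * rearrangeE μ g t := by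
  rw [lintegral_mul_eq_lintegral_meas hf hg,
    lintegral_mul_eq_lintegral_meas (measurable_rearrangeE f) (measurable_rearrangeE g)]
  refine lintegral_mono fun s => lintegral_mono fun t => ?_
  simp_rw [lt_rearrangeE_iff, ← Set.ofPred_and, ← lt_min_iff]
  rw [volume_ofReal_lt]
  exact le_min (measure_mono fun x hx => hx.1) (measure_mono fun x hx => hx.2)

/-- The set where the inequality fails has the measure of a set of `t > 0` at which `f*` exceeds its
own supremum. -/
theorem ae_le_iSup_rearrangeE (f : α → ℝ≥0∞) :
    ∀ᵐ x ∂μ, f x ≤ ⨆ t : Set.Ioi (0 : ℝ), rearrangeE μ f t := by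
  rw [ae_iff]
  simp_rw [not_le]
  rw [← volume_lt_rearrangeE, Measure.restrict_apply
    (measurableSet_lt measurable_const (measurable_rearrangeE f))]
  convert measure_empty (μ := (volume : Measure ℝ))
  ext t
  simp only [Set.mem_inter_iff, Set.mem_ofPred_eq, Set.mem_empty_iff_false, iff_false, not_and]
  exact fun hlt ht =>
    hlt.not_ge (le_iSup (fun t : Set.Ioi (0 : ℝ) => rearrangeE μ f t) ⟨t, ht⟩)

theorem essSup_add_le_rearrangeE (f g : α → ℝ≥0∞) :
    essSup (fun x => f x + g x) μ ≤ essSup (fun t => rearrangeE μ f t + rearrangeE μ g t)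
      (volume.restrict (Set.Ioi (0 : ℝ))) := by
  set C := essSup (fun t => rearrangeE μ f t + rearrangeE μ g t)
    (volume.restrict (Set.Ioi (0 : ℝ))) with hC
  -- By monotonicity, a bound for `f* + g*` almost everywhere on `(0, ∞)` holds everywhere.
  have key : ∀ t : ℝ, 0 < t → rearrangeE μ f t + rearrangeE μ g t ≤ C := by
    intro t ht
    have hae := ENNReal.ae_le_essSup (μ := volume.restrict (Set.Ioi (0 : ℝ)))
      (fun t => rearrangeE μ f t + rearrangeE μ g t)
    rw [ae_restrict_iff' measurableSet_Ioi] at hae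
    have hpos : volume (Set.Ioo 0 t) ≠ 0 := by simp [ht]
    obtain ⟨s, hs, hsC⟩ := (Filter.Frequently.and_eventually
      (frequently_ae_mem_iff.2 hpos) hae).exists
    exact (add_le_add (rearrangeE_antitone f hs.2.le) (rearrangeE_antitone g hs.2.le)).trans
      (hsC hs.1)
  have hsum : (⨆ t : Set.Ioi (0 : ℝ), rearrangeE μ f t) +
      (⨆ t : Set.Ioi (0 : ℝ), rearrangeE μ g t) ≤ C := by
    have : Nonempty (Set.Ioi (0 : ℝ)) := ⟨⟨1, Set.mem_Ioi.2 one_pos⟩⟩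
    refine ENNReal.iSup_add_iSup_le fun s t => ?_
    exact (add_le_add (rearrangeE_antitone f (min_le_left (s : ℝ) t))
      (rearrangeE_antitone g (min_le_right (s : ℝ) t))).trans (key _ (lt_min s.2 t.2))
  refine essSup_le_of_ae_le C ?_
  filter_upwards [ae_le_iSup_rearrangeE (μ := μ) f, ae_le_iSup_rearrangeE (μ := μ) g] with x hx hy
  exact (add_le_add hx hy).trans hsum

/-- The case `1 < p < ∞`, by Hardy–Littlewood and Hölder applied to
`(f + g) ^ p = f (f + g) ^ (p - 1) + g (f + g) ^ (p - 1)`. -/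
theorem lintegral_rpow_add_le_rearrangeE [SFinite μ] {f g : α → ℝ≥0∞} (hf : Measurable f)
    (hg : Measurable g) {p : ℝ} (hp : 1 < p) :
    (∫⁻ x, (f x + g x) ^ p ∂μ) ^ (1 / p) ≤
      (∫⁻ t in Set.Ioi (0 : ℝ), (rearrangeE μ f t + rearrangeE μ g t) ^ p) ^ (1 / p) := by
  have hp0 : 0 < p := one_pos.trans hp
  -- `I` and `J` are the `p`-th powers of the two sides; reduce to `0 < I < ∞` and `J < ∞`.
  set I := ∫⁻ x, (f x + g x) ^ p ∂μ with hI
  set J := ∫⁻ t in Set.Ioi (0 : ℝ), (rearrangeE μ f t + rearrangeE μ g t) ^ p with hJ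
  rcases eq_or_ne J ∞ with hJtop | hJtop
  · simp [hJtop, hp0]
  rcases eq_or_ne I 0 with hI0 | hI0
  · simp [hI0, hp0]
  have hItop : I ≠ ∞ := by
    refine (ENNReal.lintegral_rpow_add_lt_top_of_lintegral_rpow_lt_top hf.aemeasurable
      ?_ ?_ hp.le).ne
    · rw [← lintegral_rpow_rearrangeE hf hp0]
      refine lt_of_le_of_lt (lintegral_mono fun t => ?_) hJtop.lt_top
      gcongr
      exact le_self_add
    · rw [← lintegral_rpow_rearrangeE hg hp0]
      refine lt_of_le_of_lt (lintegral_mono fun t => ?_) hJtop.lt_top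
      gcongr
      exact le_add_self
  have hpq := Real.HolderConjugate.conjExponent hp
  set q := p.conjExponent with hq
  set G : α → ℝ≥0∞ := fun x => (f x + g x) ^ (p - 1) with hG
  have hGm : Measurable G := (hf.add hg).pow_const _
  have hGq : ∫⁻ t in Set.Ioi (0 : ℝ), rearrangeE μ G t ^ q = I := by
    rw [lintegral_rpow_rearrangeE hGm hpq.symm.pos]
    simp_rw [hG, ← ENNReal.rpow_mul, hpq.sub_one_mul_conj]
    rfl
  have hmain : I ≤ J ^ (1 / p) * I ^ (1 / q) := by
    calc I = ∫⁻ x, (f x * G x + g x * G x) ∂μ := by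
          refine lintegral_congr fun x => ?_
          rw [← add_mul, hG]
          nth_rw 2 [← ENNReal.rpow_one (f x + g x)]
          rw [← ENNReal.rpow_add_of_nonneg _ _ zero_le_one (by linarith)]
          simp
      _ = (∫⁻ x, f x * G x ∂μ) + ∫⁻ x, g x * G x ∂μ := lintegral_add_left (hf.mul hGm) _
      _ ≤ (∫⁻ t in Set.Ioi (0 : ℝ), rearrangeE μ f t * rearrangeE μ G t) +
          ∫⁻ t in Set.Ioi (0 : ℝ), rearrangeE μ g t * rearrangeE μ G t :=
        add_le_add (lintegral_mul_le_rearrangeE hf hGm) (lintegral_mul_le_rearrangeE hg hGm)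
      _ = ∫⁻ t in Set.Ioi (0 : ℝ),
          (rearrangeE μ f t + rearrangeE μ g t) * rearrangeE μ G t := by
        simp_rw [add_mul]
        exact (lintegral_add_left ((measurable_rearrangeE f).mul (measurable_rearrangeE G)) _).symm
      _ ≤ J ^ (1 / p) * I ^ (1 / q) := by
        rw [← hGq]
        exact ENNReal.lintegral_mul_le_Lp_mul_Lq _ hpq
          ((measurable_rearrangeE f).add (measurable_rearrangeE g)).aemeasurable
          (measurable_rearrangeE G).aemeasurable
  have hsplit : I ^ (1 / p) * I ^ (1 / q) = I := by
    rw [← ENNReal.rpow_add _ _ hI0 hItop]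
    simp [hpq.inv_add_inv_eq_one]
  have hc0 : I ^ (1 / q) ≠ 0 := by simp [hI0, hItop]
  have hctop : I ^ (1 / q) ≠ ∞ :=
    ENNReal.rpow_ne_top_of_nonneg (by simpa using hpq.symm.nonneg) hItop
  rw [← ENNReal.mul_le_mul_iff_left hc0 hctop, hsplit]
  exact hmain

end Rearrange

/-- If `h₁, h₂` are non-negative measurable functions on `ℝⁿ` and `1 ≤ p ≤ ∞`, then
`‖h₁ + h₂ | L_p(ℝⁿ)‖ ≤ ‖h₁* + h₂* | L_p(0,∞)‖`. -/
theorem lpNorm_add_le_lpNorm_rearrangement_add (n : ℕ) (hn : 0 < n) (p : ℝ≥0∞) (hp : 1 ≤ p)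
    (h₁ h₂ : EuclideanSpace ℝ (Fin n) → ℝ) (hmeas₁ : Measurable h₁) (hmeas₂ : Measurable h₂)
    (hpos₁ : ∀ x, 0 ≤ h₁ x) (hpos₂ : ∀ x, 0 ≤ h₂ x) :
    lpNormE volume p (fun x => ENNReal.ofReal (h₁ x + h₂ x)) ≤
      lpNormE (volume.restrict (Set.Ioi (0 : ℝ))) p
        (fun t => rearrangement h₁ t + rearrangement h₂ t) := by
  have h1 : ∀ (h : EuclideanSpace ℝ (Fin n) → ℝ), (∀ x, 0 ≤ h x) →
      rearrangement h = rearrangeE volume fun x => ENNReal.ofReal (h x) := by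
    intro h hpos
    ext t
    simp only [rearrangement, rearrangeE, ← enorm_eq_nnnorm, Real.enorm_of_nonneg (hpos _)]
  rw [h1 h₁ hpos₁, h1 h₂ hpos₂]
  simp_rw [ENNReal.ofReal_add (hpos₁ _) (hpos₂ _)]
  have hf := hmeas₁.ennreal_ofReal
  have hg := hmeas₂.ennreal_ofReal
  unfold lpNormE
  split_ifs with hptop
  · exact essSup_add_le_rearrangeE _ _
  have hp' : 1 ≤ p.toReal := by
    simpa using (ENNReal.toReal_le_toReal one_ne_top hptop).2 hp
  rcases hp'.eq_or_lt with hp1 | hp1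
  · simp only [← hp1, ENNReal.rpow_one, div_one]
    rw [lintegral_add_left hf, lintegral_add_left (measurable_rearrangeE _),
      lintegral_rearrangeE hf, lintegral_rearrangeE hg]
  · exact lintegral_rpow_add_le_rearrangeE hf hg hp1


end
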